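/- arXiv:2510.25149 — 7 statements merged into one kernel-verified Lean document; each statement's English description precedes it below -/
import Mathlib

section
/- Let k be a field, Γ a group, and φ : Γ →* SL(2, k) a group homomorphism into the special linear group of 2×2 matrices over k. Suppose φ is reducible, i.e., there is a one-dimensional k-subspace L of k² such that (φ γ) v ∈ L for every γ ∈ Γ and v ∈ L. If g and h are conjugate elements of Γ (h = w g w⁻¹ for some w ∈ Γ), then either tr(φ(g·h)) = 2 or tr(φ(g·h)) = tr(φ(g))² − 2. -/
theorem aux_trace {k : Type*} [Field k] (M : Matrix.SpecialLinearGroup (Fin 2) k)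
    (v : Fin 2 → k) (hv : v ≠ 0) (c : k)
    (h : (M : Matrix (Fin 2) (Fin 2) k).mulVec v = c • v) :
    c * Matrix.trace (M : Matrix (Fin 2) (Fin 2) k) = c ^ 2 + 1 := by
  have hd := M.det_coe
  rw [Matrix.det_fin_two] at hd
  rw [Matrix.trace_fin_two]
  have h0 := congrFun h 0
  have h1 := congrFun h 1
  simp only [Matrix.mulVec, dotProduct, Fin.sum_univ_two, Pi.smul_apply, smul_eq_mul] at h0 h1
  generalize (M : Matrix (Fin 2) (Fin 2) k) 0 0 = a at *
  generalize (M : Matrix (Fin 2) (Fin 2) k) 0 1 = b at *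
  generalize (M : Matrix (Fin 2) (Fin 2) k) 1 0 = p at *
  generalize (M : Matrix (Fin 2) (Fin 2) k) 1 1 = q at *
  by_contra hne
  have hne' : c * (a + q) - (c ^ 2 + 1) ≠ 0 := sub_ne_zero.mpr hne
  apply hv
  have hx : (c * (a + q) - (c ^ 2 + 1)) * v 0 = 0 := by
    linear_combination v 0 * hd - (q - c) * h0 + b * h1
  have hy : (c * (a + q) - (c ^ 2 + 1)) * v 1 = 0 := by
    linear_combination v 1 * hd - (a - c) * h1 + p * h0
  funext i
  fin_cases i
  · simpa [hne'] using hx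
  · simpa [hne'] using hy

/-- If a representation `φ : Γ → SL(2,k)` is reducible (preserves a one-dimensional
subspace `L` of `k²`), and `g, h` are conjugate elements of `Γ`, then either
`tr(φ(g*h)) = 2` or `tr(φ(g*h)) = tr(φ(g))² - 2`. -/
theorem reducible_trace_of_conj {k : Type*} [Field k] {Γ : Type*} [Group Γ]
    (φ : Γ →* Matrix.SpecialLinearGroup (Fin 2) k)
    (L : Submodule k (Fin 2 → k)) (hL : Module.finrank k L = 1)
    (hinv : ∀ γ : Γ, ∀ v ∈ L, ((φ γ : Matrix (Fin 2) (Fin 2) k)).mulVec v ∈ L)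
    (g h w : Γ) (hconj : h = w * g * w⁻¹) :
    Matrix.trace ((φ (g * h) : Matrix (Fin 2) (Fin 2) k)) = 2 ∨
    Matrix.trace ((φ (g * h) : Matrix (Fin 2) (Fin 2) k)) =
      (Matrix.trace ((φ g : Matrix (Fin 2) (Fin 2) k)))^2 - 2 := by
  have key : ∃ v : Fin 2 → k, v ≠ 0 ∧ ∀ γ : Γ, ∃ c : k,
      (φ γ : Matrix (Fin 2) (Fin 2) k).mulVec v = c • v := by
    obtain ⟨v, hv, hs⟩ := finrank_eq_one_iff'.mp hL
    refine ⟨v, fun h0 => hv (Subtype.ext h0), fun γ => ?_⟩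
    obtain ⟨c, hc⟩ := hs ⟨_, hinv γ v v.2⟩
    exact ⟨c, (congrArg Subtype.val hc).symm⟩
  obtain ⟨v, hv, hs⟩ := key
  obtain ⟨a, ha⟩ := hs g
  obtain ⟨d, hd⟩ := hs w
  obtain ⟨e, he⟩ := hs w⁻¹
  have mulv : ∀ (x y : Γ), (φ (x * y) : Matrix (Fin 2) (Fin 2) k).mulVec v =
      (φ x : Matrix (Fin 2) (Fin 2) k).mulVec
        ((φ y : Matrix (Fin 2) (Fin 2) k).mulVec v) := by
    intro x y
    rw [map_mul, Matrix.SpecialLinearGroup.coe_mul, Matrix.mulVec_mulVec]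
  have hed : e * d = 1 := by
    have h1 := mulv w w⁻¹
    rw [he, Matrix.mulVec_smul, hd, mul_inv_cancel, map_one,
      Matrix.SpecialLinearGroup.coe_one, Matrix.one_mulVec, smul_smul] at h1
    have h2 : (e * d - 1) • v = 0 := by rw [sub_smul, one_smul, ← h1, sub_self]
    rcases smul_eq_zero.mp h2 with h3 | h3
    · exact sub_eq_zero.mp h3
    · exact absurd h3 hv
  have hgh : (φ (g * h) : Matrix (Fin 2) (Fin 2) k).mulVec v = (a ^ 2) • v := by
    have hwg : (φ (w * g) : Matrix (Fin 2) (Fin 2) k).mulVec v = (a * d) • v := by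
      rw [mulv, ha, Matrix.mulVec_smul, hd, smul_smul]
    rw [mulv, hconj, mulv, he, Matrix.mulVec_smul, hwg, Matrix.mulVec_smul,
      Matrix.mulVec_smul, ha, smul_smul, smul_smul]
    congr 1
    linear_combination a ^ 2 * hed
  have t1 := aux_trace _ v hv _ ha
  have t2 := aux_trace _ v hv _ hgh
  right
  have ha0 : a ≠ 0 := by
    rintro rfl
    simp at t1
  apply mul_left_cancel₀ (pow_ne_zero 2 ha0)
  generalize Matrix.trace (φ g : Matrix (Fin 2) (Fin 2) k) = t at *
  linear_combination t2 - (a * t + a ^ 2 + 1) * t1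
end

section
/- Let F be a field of characteristic different from 2, let c₁, c₂ ∈ F, and let m, n ∈ ℍ[F, c₁, c₂] with Nrd m = 1 and Nrd n = 1. Set t := 2·m.re, u := 2·n.re, w := 2·(m·n).re, and assume t² ≠ 4. Define i := 2·m − t·1, j' := 2·n − u·1, Q := (2w − t·u)/(t² − 4), and j := −i·(j' − Q·i). Then: (a) i·i = (t² − 4)·1; (b) j·j = (−(t² − 4)(u² − 4) + (2w − t·u)²)·1; (c) i·j = −(j·i). -/
open Quaternion

/-- Orthogonalization producing a symbol-algebra presentation: squares and
anticommutation of the elements `i` and `j`. -/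
theorem symbol_generators_squares {F : Type*} [Field F] (h2 : (2 : F) ≠ 0)
    (c₁ c₂ : F) (m n : ℍ[F, c₁, c₂])
    (hm : m * star m = 1) (hn : n * star n = 1)
    (t u w : F) (ht : t = 2 * m.re) (hu : u = 2 * n.re) (hw : w = 2 * (m * n).re)
    (ht4 : t ^ 2 ≠ 4)
    (i j' j : ℍ[F, c₁, c₂]) (Q : F)
    (hi : i = 2 * m - t • 1) (hj' : j' = 2 * n - u • 1)
    (hQ : Q = (2 * w - t * u) / (t ^ 2 - 4))
    (hj : j = -(i * (j' - Q • i))) :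
    i * i = (t ^ 2 - 4) • (1 : ℍ[F, c₁, c₂]) ∧
    j * j = (-(t ^ 2 - 4) * (u ^ 2 - 4) + (2 * w - t * u) ^ 2) • (1 : ℍ[F, c₁, c₂]) ∧
    i * j = -(j * i) := by
  have hD : t ^ 2 - 4 ≠ 0 := sub_ne_zero.mpr ht4
  have hQD : Q * (t ^ 2 - 4) = 2 * w - t * u := by rw [hQ]; field_simp
  have hii : i * i = (t ^ 2 - 4) • (1 : ℍ[F, c₁, c₂]) := by
    have h := congrArg QuaternionAlgebra.re hm
    rw [hi, two_mul]
    ext <;> simp at h ⊢ <;> subst ht <;> first | (ring1; done) | linear_combination (-4 * h)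
  have hjj : j' * j' = (u ^ 2 - 4) • (1 : ℍ[F, c₁, c₂]) := by
    have h := congrArg QuaternionAlgebra.re hn
    rw [hj', two_mul]
    ext <;> simp at h ⊢ <;> subst hu <;> first | (ring1; done) | linear_combination (-4 * h)
  have hij : i * j' = (2 * (2 * w - t * u)) • (1 : ℍ[F, c₁, c₂]) - j' * i := by
    rw [hi, hj', two_mul, two_mul]
    ext <;> simp at hw ⊢ <;> subst ht hu hw <;> ring
  obtain ⟨x, hx⟩ : ∃ x, x = j' - Q • i := ⟨_, rfl⟩
  rw [← hx] at hj
  have hix : x * i = -(i * x) := by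
    rw [hx, mul_sub, sub_mul, hij, mul_smul_comm, smul_mul_assoc, hii, smul_smul, hQD]
    module
  have hxx : x * x = (u ^ 2 - 4 - Q * (2 * w - t * u)) • (1 : ℍ[F, c₁, c₂]) := by
    rw [hx]
    simp only [mul_sub, sub_mul, mul_smul_comm, smul_mul_assoc, hij, hii, hjj]
    rw [smul_smul Q (t ^ 2 - 4), hQD]
    module
  refine ⟨hii, ?_, ?_⟩
  · have : j * j = -((i * i) * (x * x)) := by
      rw [hj, neg_mul_neg, mul_assoc, ← mul_assoc x i x, hix]
      noncomm_ring
    rw [this, hii, hxx, smul_mul_smul_comm, mul_one, ← neg_smul]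
    congr 1
    linear_combination (2 * w - t * u) * hQD
  · rw [hj, neg_mul, mul_assoc i x i, hix]
    noncomm_ring
end

section
/- Let F be a field of characteristic different from 2, let c₁, c₂ ∈ F, and let m, n ∈ ℍ[F, c₁, c₂] with Nrd m = 1 and Nrd n = 1. Set t := 2·m.re, u := 2·n.re, w := 2·(m·n).re, and assume t² ≠ 4. If m and n generate ℍ[F, c₁, c₂] as an F-algebra (Algebra.adjoin F {m, n} = ⊤), then there is an F-algebra isomorphism ℍ[F, c₁, c₂] ≃ₐ[F] ℍ[F, t² − 4, −(t² − 4)(u² − 4) + (2w − t·u)²]. -/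
open Quaternion

theorem aux_sq {F : Type*} [Field F] {c₁ c₂ : F} (m : ℍ[F, c₁, c₂]) (hm : m * star m = 1)
    (t : F) (ht : t = 2 * m.re) :
    ((2:F) • m - t • 1) * ((2:F) • m - t • 1) = (t ^ 2 - 4) • (1 : ℍ[F, c₁, c₂]) := by
  subst ht
  have h := congrArg QuaternionAlgebra.re hm
  simp at h
  ext <;> simp <;> first | linear_combination (-4) * h | ring

theorem aux_anti {F : Type*} [Field F] {c₁ c₂ : F} (m n : ℍ[F, c₁, c₂])
    (t u w : F) (ht : t = 2 * m.re) (hu : u = 2 * n.re) (hw : w = 2 * (m * n).re) :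
    ((2:F) • n - u • 1) * ((2:F) • m - t • 1) = (2 * (2 * w - t * u)) • (1 : ℍ[F, c₁, c₂])
      - ((2:F) • m - t • 1) * ((2:F) • n - u • 1) := by
  subst ht hu hw
  ext <;> simp <;> ring

/-- If `m` and `n` generate the quaternion algebra `ℍ[F, c₁, c₂]` over `F`, with
reduced norms `1` and `t² ≠ 4` (where `t = Trd m`), then the algebra admits the
symbol presentation `(t² - 4, -(t² - 4)(u² - 4) + (2w - tu)²)`. -/
theorem symbol_algebra_presentation {F : Type*} [Field F] (h2 : (2 : F) ≠ 0)
    (c₁ c₂ : F) (m n : ℍ[F, c₁, c₂])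
    (hm : m * star m = 1) (hn : n * star n = 1)
    (t u w : F) (ht : t = 2 * m.re) (hu : u = 2 * n.re) (hw : w = 2 * (m * n).re)
    (ht4 : t ^ 2 ≠ 4)
    (hgen : Algebra.adjoin F ({m, n} : Set ℍ[F, c₁, c₂]) = ⊤) :
    Nonempty
      (ℍ[F, c₁, c₂] ≃ₐ[F]
        ℍ[F, t ^ 2 - 4, -(t ^ 2 - 4) * (u ^ 2 - 4) + (2 * w - t * u) ^ 2]) := by
  have hI := aux_sq m hm t ht
  have hN := aux_sq n hn u hu
  have hA := aux_anti m n t u w ht hu hw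
  have ha : t ^ 2 - 4 ≠ 0 := sub_ne_zero.mpr ht4
  have hmI : m = (2:F)⁻¹ • (((2:F) • m - t • 1) + t • 1) := by
    rw [sub_add_cancel, inv_smul_smul₀ h2]
  have hnN : n = (2:F)⁻¹ • (((2:F) • n - u • 1) + u • 1) := by
    rw [sub_add_cancel, inv_smul_smul₀ h2]
  generalize (2:F) • m - t • (1 : ℍ[F, c₁, c₂]) = I at *
  generalize (2:F) • n - u • (1 : ℍ[F, c₁, c₂]) = N at *
  generalize 2 * w - t * u = s at *
  generalize t ^ 2 - 4 = a at *
  generalize u ^ 2 - 4 = b at *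
  have hIIN : I * (I * N) = a • N := by rw [← mul_assoc, hI, smul_one_mul]
  have hINI : I * N * I = (2 * s) • I - a • N := by
    rw [mul_assoc, hA, mul_sub, hIIN, mul_smul_comm, mul_one]
  have hINN : I * N * N = b • I := by rw [mul_assoc, hN, mul_smul_comm, mul_one]
  have hININ : I * N * (I * N) = (2 * s) • (I * N) - (a * b) • 1 := by
    rw [← mul_assoc, hINI, sub_mul, smul_mul_assoc, smul_mul_assoc, hN, smul_smul]
  let B : QuaternionAlgebra.Basis ℍ[F, c₁, c₂] a 0 (-a * b + s ^ 2) :=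
    { i := I
      j := I * N - s • 1
      k := a • N - s • I
      i_mul_i := by rw [hI]; simp
      j_mul_j := by
        simp only [sub_mul, mul_sub, smul_mul_assoc, mul_smul_comm, one_mul, mul_one, hININ]
        module
      i_mul_j := by rw [mul_sub, hIIN, mul_smul_comm, mul_one]
      j_mul_i := by
        rw [sub_mul, hINI, smul_mul_assoc, one_mul]
        module }
  let f := B.liftHom
  have hfI : I ∈ f.range := ⟨⟨0, 1, 0, 0⟩, by
    simp [f, B, QuaternionAlgebra.Basis.lift]⟩
  have hfN : N ∈ f.range := ⟨⟨0, a⁻¹ * s, 0, a⁻¹⟩, by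
    simp [f, B, QuaternionAlgebra.Basis.lift, smul_sub, smul_smul, ha]⟩
  have hsurj : Function.Surjective f := by
    rw [← AlgHom.range_eq_top, eq_top_iff, ← hgen, Algebra.adjoin_le_iff]
    have h1 : ∀ (x : ℍ[F, c₁, c₂]) (r : F), x ∈ f.range → (2:F)⁻¹ • (x + r • 1) ∈ f.range :=
      fun x r hx => f.range.smul_mem (f.range.add_mem hx (f.range.smul_mem f.range.one_mem _)) _
    rintro x (rfl | rfl)
    · rw [hmI]; exact h1 _ _ hfI
    · rw [hnN]; exact h1 _ _ hfN
  have hinj : Function.Injective f :=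
    (LinearMap.injective_iff_surjective_of_finrank_eq_finrank (f := f.toLinearMap)
      (by rw [QuaternionAlgebra.finrank_eq_four, QuaternionAlgebra.finrank_eq_four])).mpr hsurj
  exact ⟨(AlgEquiv.ofBijective f ⟨hinj, hsurj⟩).symm⟩
end

section
/- Let F be a field of characteristic different from 2 and c₁, c₂ ∈ F, and suppose that D := ℍ[F, c₁, c₂] is a division ring. If x, y ∈ D satisfy x·y ≠ y·x, then x and y generate D as an F-algebra: Algebra.adjoin F {x, y} = ⊤. -/
open Quaternion

/-- A quaternion division algebra is generated as an `F`-algebra by any two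
noncommuting elements. -/
theorem quaternion_generated_by_noncommuting {F : Type*} [Field F] (h2 : (2 : F) ≠ 0)
    (c₁ c₂ : F) (hdiv : ∀ z : ℍ[F, c₁, c₂], z ≠ 0 → IsUnit z)
    (x y : ℍ[F, c₁, c₂]) (hxy : x * y ≠ y * x) :
    Algebra.adjoin F ({x, y} : Set ℍ[F, c₁, c₂]) = ⊤ := by
  have hx : x ∈ Algebra.adjoin F ({x, y} : Set ℍ[F, c₁, c₂]) :=
    Algebra.subset_adjoin (by simp)
  have hy : y ∈ Algebra.adjoin F ({x, y} : Set ℍ[F, c₁, c₂]) :=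
    Algebra.subset_adjoin (by simp)
  generalize Algebra.adjoin F ({x, y} : Set ℍ[F, c₁, c₂]) = A at hx hy ⊢
  obtain ⟨x0, a, b, c⟩ := x
  obtain ⟨y0, d, e, f⟩ := y
  have hw := sub_mem (mul_mem hx hy) (mul_mem hy hx)
  have hw0 := sub_ne_zero.mpr hxy
  have hweq : (⟨x0, a, b, c⟩ * ⟨y0, d, e, f⟩ - ⟨y0, d, e, f⟩ * ⟨x0, a, b, c⟩ : ℍ[F, c₁, c₂])
      = ⟨0, -2 * c₂ * (b * f - c * e), -2 * c₁ * (c * d - a * f), 2 * (a * e - b * d)⟩ := by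
    ext <;> simp <;> ring
  rw [hweq] at hw hw0
  generalize hp : -2 * c₂ * (b * f - c * e) = p at *
  generalize hq : -2 * c₁ * (c * d - a * f) = q at *
  generalize hr : 2 * (a * e - b * d) = r at *
  have hD : (b * f - c * e) * p + (c * d - a * f) * q + (a * e - b * d) * r ≠ 0 := by
    intro h
    have h1 : (⟨0, p, q, r⟩ * ⟨0, -p, -q, -r⟩ : ℍ[F, c₁, c₂]) = 0 := by
      ext
      · simp
        subst hp hq hr
        linear_combination (2 * c₁ * c₂) * h
      all_goals simp <;> ring
    have h3 := (hdiv _ hw0).mul_right_eq_zero.mp h1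
    apply hw0
    rw [QuaternionAlgebra.ext_iff] at h3 ⊢
    simpa using h3
  generalize hDD : (b * f - c * e) * p + (c * d - a * f) * q + (a * e - b * d) * r = D at hD
  rw [eq_top_iff]
  rintro ⟨z0, s, t, u⟩ -
  set B := s * (e * r - f * q) + t * (f * p - d * r) + u * (d * q - e * p) with hB
  set C := s * (q * c - r * b) + t * (r * a - p * c) + u * (p * b - q * a) with hC
  set E := s * (b * f - c * e) + t * (c * d - a * f) + u * (a * e - b * d) with hE
  have key : (⟨z0, s, t, u⟩ : ℍ[F, c₁, c₂]) = D⁻¹ • ((D * z0 - B * x0 - C * y0) • 1 +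
      B • ⟨x0, a, b, c⟩ + C • ⟨y0, d, e, f⟩ + E • ⟨0, p, q, r⟩) := by
    rw [eq_inv_smul_iff₀ hD]
    ext <;> simp <;> simp only [hB, hC, hE, ← hDD] <;> ring
  rw [key]
  exact A.smul_mem (add_mem (add_mem (add_mem (A.smul_mem (one_mem A) _) (A.smul_mem hx _))
    (A.smul_mem hy _)) (A.smul_mem hw _)) _
end

section
/- Let F be a field of characteristic different from 2 and c₁, c₂ ∈ F, and suppose that D := ℍ[F, c₁, c₂] is a division ring. Then D has no 3-dimensional F-subalgebras: for every F-subalgebra S of D, Module.finrank F S ≠ 3. -/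
open Quaternion

/-- A quaternion division algebra has no 3-dimensional `F`-subalgebras. -/
theorem quaternion_no_three_dim_subalgebra {F : Type*} [Field F] (h2 : (2 : F) ≠ 0)
    (c₁ c₂ : F) (hdiv : ∀ z : ℍ[F, c₁, c₂], z ≠ 0 → IsUnit z)
    (S : Subalgebra F ℍ[F, c₁, c₂]) :
    Module.finrank F S ≠ 3 := by
  intro h
  haveI : NoZeroDivisors ℍ[F, c₁, c₂] := ⟨fun {a b} hab => by
    by_cases ha : a = 0
    · exact Or.inl ha
    · exact Or.inr ((hdiv a ha).mul_right_eq_zero.1 hab)⟩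
  haveI : IsDomain ℍ[F, c₁, c₂] := NoZeroDivisors.to_isDomain _
  haveI : FiniteDimensional F S :=
    FiniteDimensional.finiteDimensional_submodule (Subalgebra.toSubmodule S)
  letI := divisionRingOfFiniteDimensional F S
  have key := Module.finrank_mul_finrank F S ℍ[F, c₁, c₂]
  rw [QuaternionAlgebra.finrank_eq_four, h] at key
  omega
end

section
/- There is a group homomorphism σ : Γ → Γ of the figure-8 knot group with σ(g) = g⁻¹ and σ(h) = g⁻²·h⁻¹·g², and σ satisfies σ ∘ σ = id; in particular σ is an order-2 automorphism of Γ (the automorphism induced by a 2-periodic symmetry of the figure-8 knot). -/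
/-- The single relator of the figure-8 knot group, in the free group on two
generators `0 ↦ g`, `1 ↦ h`: the word `h⁻¹·g⁻¹·h·g·h⁻¹·g·h·g⁻¹·h⁻¹·g`. -/
def fig8Rel : FreeGroup (Fin 2) :=
  (FreeGroup.of 1)⁻¹ * (FreeGroup.of 0)⁻¹ * FreeGroup.of 1 * FreeGroup.of 0 *
    (FreeGroup.of 1)⁻¹ * FreeGroup.of 0 * FreeGroup.of 1 * (FreeGroup.of 0)⁻¹ *
    (FreeGroup.of 1)⁻¹ * FreeGroup.of 0

/-- The figure-8 knot group, presented with two generators and one relation. -/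
abbrev Fig8Group : Type := PresentedGroup ({fig8Rel} : Set (FreeGroup (Fin 2)))

/-- The first generator `g` of the figure-8 knot group. -/
def fig8g : Fig8Group := PresentedGroup.of 0

/-- The second generator `h` of the figure-8 knot group. -/
def fig8h : Fig8Group := PresentedGroup.of 1


theorem fig8_relation : fig8h⁻¹ * fig8g⁻¹ * fig8h * fig8g * fig8h⁻¹ * fig8g * fig8h * fig8g⁻¹ *
    fig8h⁻¹ * fig8g = 1 := by
  have h := PresentedGroup.one_of_mem (rels := ({fig8Rel} : Set (FreeGroup (Fin 2))))
    (Set.mem_singleton fig8Rel)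
  exact h

/-- The order-2 automorphism of the figure-8 knot group induced by a 2-periodic
symmetry: `σ(g) = g⁻¹`, `σ(h) = g⁻²·h⁻¹·g²`, with `σ ∘ σ = id`. -/
theorem fig8_two_periodic_automorphism :
    ∃ σ : Fig8Group →* Fig8Group,
      σ fig8g = fig8g⁻¹ ∧
      σ fig8h = (fig8g ^ 2)⁻¹ * fig8h⁻¹ * fig8g ^ 2 ∧
      σ.comp σ = MonoidHom.id Fig8Group := by
  have hrel : ∀ r ∈ ({fig8Rel} : Set (FreeGroup (Fin 2))),
      FreeGroup.lift (![fig8g⁻¹, (fig8g ^ 2)⁻¹ * fig8h⁻¹ * fig8g ^ 2] : Fin 2 → Fig8Group) r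
        = 1 := by
    intro r hr
    rw [Set.mem_singleton_iff.1 hr]
    have e : FreeGroup.lift
        (![fig8g⁻¹, (fig8g ^ 2)⁻¹ * fig8h⁻¹ * fig8g ^ 2] : Fin 2 → Fig8Group) fig8Rel
        = fig8g⁻¹ * (fig8h⁻¹ * fig8g⁻¹ * fig8h * fig8g * fig8h⁻¹ * fig8g * fig8h * fig8g⁻¹ *
    fig8h⁻¹ * fig8g)⁻¹ * fig8g := by
      simp only [fig8Rel, map_mul, map_inv, FreeGroup.lift_apply_of, Matrix.cons_val_zero,
        Matrix.cons_val_one]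
      group
    rw [e, fig8_relation]
    group
  have hg : PresentedGroup.toGroup hrel fig8g = fig8g⁻¹ := PresentedGroup.toGroup.of hrel
  have hh : PresentedGroup.toGroup hrel fig8h = (fig8g ^ 2)⁻¹ * fig8h⁻¹ * fig8g ^ 2 :=
    PresentedGroup.toGroup.of hrel
  refine ⟨PresentedGroup.toGroup hrel, hg, hh, ?_⟩
  apply PresentedGroup.ext
  intro x
  fin_cases x
  · change PresentedGroup.toGroup hrel (PresentedGroup.toGroup hrel fig8g) = fig8g
    rw [hg, map_inv, hg, inv_inv]
  · change PresentedGroup.toGroup hrel (PresentedGroup.toGroup hrel fig8h) = fig8h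
    rw [hh]
    simp only [map_mul, map_inv, map_pow, hg, hh]
    group
end

section
/- Let F be a field of characteristic zero and let s ∈ F satisfy s² = 5. Define the 2×2 matrices A := (1/2) · !![s − 1, 0; 0, s + 1] and B := (1/2) · !![s − 1, 0; −2, s + 1] over F. Then det A = 1, det B = 1, the figure-8 knot group relation holds: B⁻¹ · A⁻¹ · B · A · B⁻¹ · A · B · A⁻¹ · B⁻¹ · A = 1, the line spanned by the vector (0, 1) is invariant under both A and B (so the corresponding representation of the figure-8 knot group into SL(2, F) is reducible), and (tr A)² = 5. -/
/-- The reducible representations of the figure-8 knot group at the two points of the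
canonical component with `I_g² = 5`: the matrices `A`, `B` have determinant `1`,
satisfy the figure-8 knot group relation, preserve the line spanned by `(0, 1)`, and
`(tr A)² = 5`. -/
theorem fig8_reducible_representation {F : Type*} [Field F] [CharZero F]
    (s : F) (hs : s ^ 2 = 5)
    (A B : Matrix (Fin 2) (Fin 2) F)
    (hA : A = (1 / 2 : F) • !![s - 1, 0; 0, s + 1])
    (hB : B = (1 / 2 : F) • !![s - 1, 0; -2, s + 1]) :
    A.det = 1 ∧ B.det = 1 ∧
    B⁻¹ * A⁻¹ * B * A * B⁻¹ * A * B * A⁻¹ * B⁻¹ * A = 1 ∧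
    (∀ v ∈ Submodule.span F ({![0, 1]} : Set (Fin 2 → F)),
      A.mulVec v ∈ Submodule.span F ({![0, 1]} : Set (Fin 2 → F)) ∧
      B.mulVec v ∈ Submodule.span F ({![0, 1]} : Set (Fin 2 → F))) ∧
    A.trace ^ 2 = 5 := by
  obtain ⟨a, rfl⟩ : ∃ a : F, s = 2 * a + 1 := ⟨(s - 1) / 2, by field_simp; ring⟩
  have ha : a * a = 1 - a := by
    have h4 : (4 : F) * (a * a - (1 - a)) = 0 := by linear_combination hs
    have := (mul_eq_zero.mp h4).resolve_left (by norm_num)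
    linear_combination this
  have hA' : A = !![a, 0; 0, a + 1] := by
    rw [hA]; ext i j; fin_cases i <;> fin_cases j <;> simp
    ring
  have hB' : B = !![a, 0; -1, a + 1] := by
    rw [hB]; ext i j; fin_cases i <;> fin_cases j <;> simp
    ring
  clear hA hB
  have dA : A.det = 1 := by rw [hA', Matrix.det_fin_two_of]; linear_combination ha
  have dB : B.det = 1 := by rw [hB', Matrix.det_fin_two_of]; linear_combination ha
  have iA : A⁻¹ = !![a + 1, 0; 0, a] := by
    rw [Matrix.inv_def, dA, hA', Matrix.adjugate_fin_two_of]; simp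
  have iB : B⁻¹ = !![a + 1, 0; 1, a] := by
    rw [Matrix.inv_def, dB, hB', Matrix.adjugate_fin_two_of]; simp
  refine ⟨dA, dB, ?_, ?_, ?_⟩
  · rw [iA, iB, hA', hB']
    ext i j
    fin_cases i <;> fin_cases j <;> simp [Matrix.mul_fin_two] <;> grind
  · intro v hv
    obtain ⟨c, rfl⟩ := Submodule.mem_span_singleton.mp hv
    constructor <;> refine Submodule.mem_span_singleton.mpr ⟨c * (a + 1), ?_⟩ <;>
      ext i <;> fin_cases i <;> simp [hA', hB', Matrix.mulVec, dotProduct, Fin.sum_univ_two] <;> ring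
  · rw [hA', Matrix.trace_fin_two_of]; linear_combination 4 * ha
end
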